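/- Let A = (Q, X, q₀, T, F) be an updateable timed automaton and let {G(q)}_{q ∈ Q} be the least solution to the state-based guard equations for updateable timed automata. Then the relation ≼_A on configurations of A, defined by (q, v) ≼_A (q, v') iff v ⊑_{G(q)} v', is a simulation on the configurations of A. -/

import Mathlib

open scoped NNReal

/-! ## Atomic constraints over a set of clocks -/

/-- Comparison operator `◁ ∈ {<, ≤}`. -/
inductive Ineq : Type where
  | lt : Ineq
  | le : Ineq
deriving DecidableEq

/-- Interpretation of a comparison operator on reals. -/
def Ineq.holds : Ineq → ℝ → ℝ → Prop
  | .lt, a, b => a < b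
  | .le, a, b => a ≤ b

/-- Atomic constraints over clocks `X`:
`upper x o c` is `x ◁ c` (c ∈ ℕ), `lower c o x` is `c ◁ x` (c ∈ ℕ),
`diag x y o d` is `x - y ◁ d` (d ∈ ℤ). -/
inductive Constr (X : Type) : Type where
  | upper : X → Ineq → ℕ → Constr X
  | lower : ℕ → Ineq → X → Constr X
  | diag : X → X → Ineq → ℤ → Constr X
deriving DecidableEq

namespace Constr

/-- Is the constraint a diagonal constraint `x - y ◁ d`? -/
def isDiag {X : Type} : Constr X → Bool
  | .diag _ _ _ _ => true
  | _ => false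

/-- The integer constant of a constraint. -/
def constOf {X : Type} : Constr X → ℤ
  | .upper _ _ c => (c : ℤ)
  | .lower c _ _ => (c : ℤ)
  | .diag _ _ _ d => d

/-- Satisfaction of a constraint by a clock valuation `v : X → ℝ≥0`. -/
def sat {X : Type} (v : X → ℝ≥0) : Constr X → Prop
  | .upper x o c => o.holds (v x : ℝ) (c : ℝ)
  | .lower c o x => o.holds (c : ℝ) (v x : ℝ)
  | .diag x y o d => o.holds ((v x : ℝ) - (v y : ℝ)) (d : ℝ)

end Constr

/-- Time elapse: `v + δ`. -/
def shift {X : Type} (v : X → ℝ≥0) (δ : ℝ≥0) : X → ℝ≥0 := fun x => v x + δ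

/-- The relation `v ⊑_G v'`: for all `φ ∈ G` and all delays `δ ≥ 0`,
`v + δ ⊨ φ` implies `v' + δ ⊨ φ`. -/
def simG {X : Type} (G : Set (Constr X)) (v v' : X → ℝ≥0) : Prop :=
  ∀ φ ∈ G, ∀ δ : ℝ≥0, Constr.sat (shift v δ) φ → Constr.sat (shift v' δ) φ

/-- `Z ⊑_G Z'` on sets of valuations. -/
def simGZ {X : Type} (G : Set (Constr X)) (Z Z' : Set (X → ℝ≥0)) : Prop :=
  ∀ v ∈ Z, ∃ v' ∈ Z', simG G v v'

open Classical in
/-- `[R]v`: reset the clocks in `R` to `0`. -/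
noncomputable def reset {X : Type} (R : Set X) (v : X → ℝ≥0) : X → ℝ≥0 :=
  fun x => if x ∈ R then 0 else v x

/-- Weakest precondition `wp(⊑_φ, R)` of a single constraint over a reset. -/
def wpReset {X : Type} (R : Set X) : Constr X → Set (Constr X)
  | .upper x o c => {ψ | x ∉ R ∧ ψ = .upper x o c}
  | .lower c o x => {ψ | x ∉ R ∧ ψ = .lower c o x}
  | .diag x y o d =>
      {ψ | (x ∉ R ∧ y ∉ R ∧ ψ = .diag x y o d) ∨
           (x ∉ R ∧ y ∈ R ∧ 0 ≤ d ∧ ψ = .upper x o d.toNat) ∨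
           (x ∈ R ∧ y ∉ R ∧ 0 ≤ -d ∧ ψ = .lower (-d).toNat o y)}

/-- Weakest precondition `wp(⊑_G, R)` of a set of constraints over a reset. -/
def wpResetSet {X : Type} (R : Set X) (G : Set (Constr X)) : Set (Constr X) :=
  ⋃ φ ∈ G, wpReset R φ

/-! ## Timed automata -/

/-- A transition: source state, guard (finite conjunction of constraints),
reset set, target state. -/
abbrev TTrans (Q X : Type) : Type := Q × Finset (Constr X) × Set X × Q

def TTrans.src {Q X : Type} (t : TTrans Q X) : Q := t.1
def TTrans.grd {Q X : Type} (t : TTrans Q X) : Finset (Constr X) := t.2.1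
def TTrans.rst {Q X : Type} (t : TTrans Q X) : Set X := t.2.2.1
def TTrans.tgt {Q X : Type} (t : TTrans Q X) : Q := t.2.2.2

/-- A timed automaton. -/
structure TA (Q X : Type) : Type where
  init : Q
  trans : Finset (TTrans Q X)
  acc : Set Q

/-- Action step of a timed automaton along transition `t`. -/
def Step {Q X : Type} (A : TA Q X) (t : TTrans Q X) (c c' : Q × (X → ℝ≥0)) : Prop :=
  t ∈ A.trans ∧ TTrans.src t = c.1 ∧ (∀ φ ∈ TTrans.grd t, Constr.sat c.2 φ) ∧
    c'.1 = TTrans.tgt t ∧ c'.2 = reset (TTrans.rst t) c.2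

/-- `r` is a simulation on the configurations of `A`: a reflexive transitive
relation, relating only configurations with equal states, compatible with
delays and action transitions. -/
def IsSimulation {Q X : Type} (A : TA Q X)
    (r : (Q × (X → ℝ≥0)) → (Q × (X → ℝ≥0)) → Prop) : Prop :=
  Reflexive r ∧ Transitive r ∧
  ∀ q v q' v', r (q, v) (q', v') →
    q = q' ∧
    (∀ δ : ℝ≥0, ∃ δ' : ℝ≥0, r (q, shift v δ) (q, shift v' δ')) ∧
    (∀ t c₁, Step A t (q, v) c₁ →
      ∃ v₁', Step A t (q, v') (c₁.1, v₁') ∧ r c₁ (c₁.1, v₁'))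

/-- The state-based guard equations:
`G(q) = ⋃_{(q,g,R,q₁) ∈ T} ({g} ∪ wp(⊑_{G(q₁)}, R))`. -/
def GuardEq {Q X : Type} (A : TA Q X) (G : Q → Set (Constr X)) : Prop :=
  ∀ q, G q = ⋃ t ∈ A.trans, ⋃ (_ : TTrans.src t = q),
    ((TTrans.grd t : Set (Constr X)) ∪ wpResetSet (TTrans.rst t) (G (TTrans.tgt t)))

/-! ## LU bounds -/

def lowerConstAt {X : Type} [DecidableEq X] (x : X) : Constr X → WithBot ℕ
  | .lower c _ y => if y = x then (c : WithBot ℕ) else ⊥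
  | _ => ⊥

def upperConstAt {X : Type} [DecidableEq X] (x : X) : Constr X → WithBot ℕ
  | .upper y _ c => if y = x then (c : WithBot ℕ) else ⊥
  | _ => ⊥

/-- `L_G(x)`: maximum constant among lower-bound constraints `c ◁ x` in `G`
(`⊥ = -∞` if none). -/
def Lbound {X : Type} [DecidableEq X] (G : Finset (Constr X)) (x : X) : WithBot ℕ :=
  G.sup (lowerConstAt x)

/-- `U_G(x)`: maximum constant among upper-bound constraints `x ◁ c` in `G`
(`⊥ = -∞` if none). -/
def Ubound {X : Type} [DecidableEq X] (G : Finset (Constr X)) (x : X) : WithBot ℕ :=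
  G.sup (upperConstAt x)

/-- The LU simulation `v ≼_LU v'` for bounds functions `L U : X → ℕ ∪ {-∞}`. -/
def luSim {X : Type} (L U : X → WithBot ℕ) (v v' : X → ℝ≥0) : Prop :=
  ∀ x : X,
    (v' x < v x → (L x).map (fun c : ℕ => (c : ℝ)) < ((v' x : ℝ) : WithBot ℝ)) ∧
    (v x < v' x → (U x).map (fun c : ℕ => (c : ℝ)) < ((v x : ℝ) : WithBot ℝ))

/-- The relation `v ⊑^LU_G v'`: `v ≼_{LU(G)} v'` and every diagonal constraint
of `G` satisfied by `v` is satisfied by `v'`. -/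
def luglu {X : Type} [DecidableEq X] (G : Finset (Constr X)) (v v' : X → ℝ≥0) : Prop :=
  luSim (Lbound G) (Ubound G) v v' ∧
    ∀ φ ∈ G, φ.isDiag → Constr.sat v φ → Constr.sat v' φ

/-- Lifting a relation on valuations to sets of valuations. -/
def zoneRel {X : Type} (r : (X → ℝ≥0) → (X → ℝ≥0) → Prop) (Z Z' : Set (X → ℝ≥0)) : Prop :=
  ∀ v ∈ Z, ∃ v' ∈ Z', r v v'

/-! ## Runs of timed automata -/

/-- `stepsFrom A c l`: the alternating delay-action sequence `l` is a valid
sequence of steps of `A` starting at configuration `c`. -/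
def stepsFrom {Q X : Type} (A : TA Q X) :
    (Q × (X → ℝ≥0)) → List (ℝ≥0 × TTrans Q X) → Prop
  | _, [] => True
  | c, (δ, t) :: l =>
      t ∈ A.trans ∧ TTrans.src t = c.1 ∧
      (∀ φ ∈ TTrans.grd t, Constr.sat (shift c.2 δ) φ) ∧
      stepsFrom A (TTrans.tgt t, reset (TTrans.rst t) (shift c.2 δ)) l

/-- Configuration reached after a sequence of delay-action steps. -/
noncomputable def endConfig {Q X : Type} :
    (Q × (X → ℝ≥0)) → List (ℝ≥0 × TTrans Q X) → (Q × (X → ℝ≥0))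
  | c, [] => c
  | c, (δ, t) :: l => endConfig (TTrans.tgt t, reset (TTrans.rst t) (shift c.2 δ)) l

/-- A run of `A`: a valid sequence of delay-action steps from `(q₀, 0̄)`. -/
def TA.Run {Q X : Type} (A : TA Q X) : Type :=
  {l : List (ℝ≥0 × TTrans Q X) // stepsFrom A (A.init, fun _ => 0) l}

/-- A run is accepting if it ends in an accepting state. -/
def TA.Accepting {Q X : Type} (A : TA Q X) (r : A.Run) : Prop :=
  (endConfig (A.init, fun _ => 0) r.val).1 ∈ A.acc

/-- `A` is diagonal-free: no guard contains a diagonal constraint. -/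
def DiagFree {Q X : Type} (A : TA Q X) : Prop :=
  ∀ t ∈ A.trans, ∀ φ ∈ TTrans.grd t, ¬ φ.isDiag

/-- The (finite) set of diagonal constraints occurring in guards of `A`. -/
def diagGuards {Q X : Type} [DecidableEq X] (A : TA Q X) : Finset (Constr X) :=
  A.trans.biUnion fun t => (TTrans.grd t).filter fun φ => φ.isDiag

/-! ## Updateable timed automata -/

/-- Atomic update of a clock: `x := c` or `x := y + d`. -/
inductive AtomicUp (X : Type) : Type where
  | const : ℕ → AtomicUp X
  | add : X → ℤ → AtomicUp X
deriving DecidableEq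

/-- `up(v) : X → ℝ` (may be negative). -/
def applyUpd {X : Type} (up : X → AtomicUp X) (v : X → ℝ≥0) : X → ℝ :=
  fun x => match up x with
    | .const c => (c : ℝ)
    | .add y d => (v y : ℝ) + (d : ℝ)

/-- Weakest precondition `wp(⊑_φ, up)` of a single constraint over an update. -/
def wpUpd {X : Type} [DecidableEq X] (up : X → AtomicUp X) : Constr X → Set (Constr X)
  | .upper x o c =>
      match up x with
      | .const _ => ∅
      | .add y d => if 0 ≤ (c : ℤ) - d then {Constr.upper y o ((c : ℤ) - d).toNat} else ∅
  | .lower c o x =>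
      match up x with
      | .const _ => ∅
      | .add y d => if 0 ≤ (c : ℤ) - d then {Constr.lower ((c : ℤ) - d).toNat o y} else ∅
  | .diag x y o c =>
      match up x, up y with
      | .const _, .const _ => ∅
      | .add y₁ d₁, .const c₂ =>
          if 0 ≤ c + (c₂ : ℤ) - d₁ then {Constr.upper y₁ o (c + (c₂ : ℤ) - d₁).toNat} else ∅
      | .const c₁, .add y₂ d₂ =>
          if 0 ≤ (c₁ : ℤ) - d₂ - c then {Constr.lower ((c₁ : ℤ) - d₂ - c).toNat o y₂} else ∅
      | .add y₁ d₁, .add y₂ d₂ =>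
          if y₁ = y₂ then ∅ else {Constr.diag y₁ y₂ o (c - d₁ + d₂)}

/-- Weakest precondition `wp(⊑_G, up)` of a set of constraints over an update. -/
def wpUpdSet {X : Type} [DecidableEq X] (up : X → AtomicUp X) (G : Set (Constr X)) :
    Set (Constr X) :=
  ⋃ φ ∈ G, wpUpd up φ

/-- The set of constraints `{0 ≤ x | x ∈ X}`. -/
def nonnegConstrs (X : Type) : Set (Constr X) := {φ | ∃ x : X, φ = Constr.lower 0 Ineq.le x}

/-- A transition of an updateable timed automaton: source, guard, update, target. -/
abbrev UTrans (Q X : Type) : Type := Q × Finset (Constr X) × (X → AtomicUp X) × Q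

def UTrans.src {Q X : Type} (t : UTrans Q X) : Q := t.1
def UTrans.grd {Q X : Type} (t : UTrans Q X) : Finset (Constr X) := t.2.1
def UTrans.upd {Q X : Type} (t : UTrans Q X) : X → AtomicUp X := t.2.2.1
def UTrans.tgt {Q X : Type} (t : UTrans Q X) : Q := t.2.2.2

/-- An updateable timed automaton. -/
structure UTA (Q X : Type) : Type where
  init : Q
  trans : Finset (UTrans Q X)
  acc : Set Q

/-- Action step of an updateable timed automaton along transition `t`:
the guard holds, `up(v) ≥ 0`, and the new valuation is `up(v)`. -/
def UStep {Q X : Type} (A : UTA Q X) (t : UTrans Q X) (c c' : Q × (X → ℝ≥0)) : Prop :=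
  t ∈ A.trans ∧ UTrans.src t = c.1 ∧ (∀ φ ∈ UTrans.grd t, Constr.sat c.2 φ) ∧
    c'.1 = UTrans.tgt t ∧ ∀ x, (c'.2 x : ℝ) = applyUpd (UTrans.upd t) c.2 x

/-- `r` is a simulation on configurations of an updateable timed automaton. -/
def IsSimulationU {Q X : Type} (A : UTA Q X)
    (r : (Q × (X → ℝ≥0)) → (Q × (X → ℝ≥0)) → Prop) : Prop :=
  Reflexive r ∧ Transitive r ∧
  ∀ q v q' v', r (q, v) (q', v') →
    q = q' ∧
    (∀ δ : ℝ≥0, ∃ δ' : ℝ≥0, r (q, shift v δ) (q, shift v' δ')) ∧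
    (∀ t c₁, UStep A t (q, v) c₁ →
      ∃ v₁', UStep A t (q, v') (c₁.1, v₁') ∧ r c₁ (c₁.1, v₁'))

/-- State-based guard equations for updateable timed automata. -/
def GuardEqU {Q X : Type} [DecidableEq X] (A : UTA Q X) (G : Q → Set (Constr X)) : Prop :=
  ∀ q, G q = ⋃ t ∈ A.trans, ⋃ (_ : UTrans.src t = q),
    ((UTrans.grd t : Set (Constr X)) ∪ wpUpdSet (UTrans.upd t) (nonnegConstrs X)
      ∪ wpUpdSet (UTrans.upd t) (G (UTrans.tgt t)))

/-- Kleene iterates `G^i(q)` of the state-based guard equations. -/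
def iterG {Q X : Type} [DecidableEq X] (A : UTA Q X) : ℕ → Q → Set (Constr X)
  | 0 => fun q => ⋃ t ∈ A.trans, ⋃ (_ : UTrans.src t = q),
      ((UTrans.grd t : Set (Constr X)) ∪ wpUpdSet (UTrans.upd t) (nonnegConstrs X))
  | (i + 1) => fun q => iterG A i q ∪
      (⋃ t ∈ A.trans, ⋃ (_ : UTrans.src t = q),
        wpUpdSet (UTrans.upd t) (iterG A i (UTrans.tgt t)))

/-- `G^{i+1}(q)` is coloured red: a new diagonal constraint was added, or a new
non-diagonal constraint whose constant is strictly bigger than the constant of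
every non-diagonal constraint of the same kind on the same clock in `G^i(q)`. -/
def RedAt {Q X : Type} [DecidableEq X] (A : UTA Q X) : ℕ → Q → Prop
  | 0, _ => False
  | (i + 1), q =>
      (∃ φ : Constr X, φ ∈ iterG A (i + 1) q ∧ φ ∉ iterG A i q ∧ φ.isDiag) ∨
      (∃ (x : X) (o : Ineq) (c : ℕ),
        Constr.upper x o c ∈ iterG A (i + 1) q ∧ Constr.upper x o c ∉ iterG A i q ∧
        ∀ (o' : Ineq) (c' : ℕ), Constr.upper x o' c' ∈ iterG A i q → c' < c) ∨
      (∃ (x : X) (o : Ineq) (c : ℕ),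
        Constr.lower c o x ∈ iterG A (i + 1) q ∧ Constr.lower c o x ∉ iterG A i q ∧
        ∀ (o' : Ineq) (c' : ℕ), Constr.lower c' o' x ∈ iterG A i q → c' < c)

/-- `G^i(q)` is coloured green. -/
def GreenAt {Q X : Type} [DecidableEq X] (A : UTA Q X) (i : ℕ) (q : Q) : Prop :=
  ¬ RedAt A i q

/-- Absolute value of the constant of an atomic update. -/
def updBound {X : Type} : AtomicUp X → ℕ
  | .const c => c
  | .add _ d => d.natAbs

/-! ## The statement -/

/-!
For an update `up`, the constraints in `wp(⊑_φ, up)` control how `up(v) + δ ⊨ φ` depends on `v`: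
substituting `up` into `φ` yields either an inequality not depending on `v`, or `z ◁ d'`, `d' ◁ z`
or `z - z' ◁ d'` with clocks `z`, `z'`. The inequalities `z ◁ d'` and `d' ◁ z` with `d' < 0` may be
left out, as the first never holds and the second always does. Hence `v ⊑ v'` for
`wp(⊑_G, up)` gives `up(v) ⊑_G up(v')`. Applied to `0 ≤ x`, the same fact shows `up(v') ≥ 0`,
provided that satisfaction is extended to real valuations, because `up(v')` is not yet known to be
a clock valuation at that point. So, once the family `G` is closed under the guard equations, the
relation given by `⊑_{G(q)}` is preserved by action steps; a delay is simulated by the same delay.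
-/

namespace Ineq

variable {o : Ineq} {a b a' b' : ℝ}

lemma holds.le (h : o.holds a b) : a ≤ b := by
  cases o with
  | lt => exact le_of_lt h
  | le => exact h

lemma holds_of_lt (h : a < b) : o.holds a b := by
  cases o with
  | lt => exact h
  | le => exact h.le

lemma holds_congr_of_sub_eq_sub (h : a - b = a' - b') : o.holds a b ↔ o.holds a' b' := by
  cases o with
  | lt => exact sub_neg.symm.trans (h ▸ sub_neg)
  | le => exact sub_nonpos.symm.trans (h ▸ sub_nonpos)

end Ineq

section Simulation

variable {X : Type}

lemma shift_zero (v : X → ℝ≥0) : shift v 0 = v :=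
  funext fun x => add_zero (v x)

lemma shift_shift (v : X → ℝ≥0) (δ ε : ℝ≥0) : shift (shift v δ) ε = shift v (δ + ε) :=
  funext fun x => add_assoc (v x) δ ε

namespace simG

variable {G H : Set (Constr X)} {v v' v'' : X → ℝ≥0}

lemma refl (G : Set (Constr X)) (v : X → ℝ≥0) : simG G v v := fun _ _ _ h => h

lemma trans (h : simG G v v') (h' : simG G v' v'') : simG G v v'' :=
  fun φ hφ δ hv => h' φ hφ δ (h φ hφ δ hv)

lemma mono (hGH : G ⊆ H) (h : simG H v v') : simG G v v' := fun φ hφ => h φ (hGH hφ)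

lemma shift (h : simG G v v') (δ : ℝ≥0) : simG G (shift v δ) (shift v' δ) := by
  intro φ hφ ε hv
  rw [shift_shift] at hv ⊢
  exact h φ hφ (δ + ε) hv

lemma sat (h : simG G v v') {φ : Constr X} (hφ : φ ∈ G) (hv : Constr.sat v φ) :
    Constr.sat v' φ := by
  simpa only [shift_zero] using h φ hφ 0 (by rwa [shift_zero])

variable {o : Ineq} {y y₁ y₂ : X} {d : ℤ}

lemma holds_upper (h : simG (if 0 ≤ d then {Constr.upper y o d.toNat} else ∅) v v') (δ : ℝ≥0)
    (hv : o.holds (v y + δ : ℝ) d) : o.holds (v' y + δ : ℝ) d := by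
  have hd : 0 ≤ d := by exact_mod_cast (v y + δ).coe_nonneg.trans hv.le
  rw [if_pos hd] at h
  lift d to ℕ using hd
  exact h _ rfl δ hv

lemma holds_lower (h : simG (if 0 ≤ d then {Constr.lower d.toNat o y} else ∅) v v') (δ : ℝ≥0)
    (hv : o.holds (d : ℝ) (v y + δ)) : o.holds (d : ℝ) (v' y + δ) := by
  by_cases hd : 0 ≤ d
  · rw [if_pos hd] at h
    lift d to ℕ using hd
    exact h _ rfl δ hv
  · have hd_neg : (d : ℝ) < 0 := by exact_mod_cast not_le.mp hd
    exact Ineq.holds_of_lt (hd_neg.trans_le (v' y + δ).coe_nonneg)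

lemma holds_diag (h : simG {Constr.diag y₁ y₂ o d} v v') (hv : o.holds (v y₁ - v y₂ : ℝ) d) :
    o.holds (v' y₁ - v' y₂ : ℝ) d :=
  h.sat rfl hv

end simG

end Simulation

section Update

variable {X : Type}

/-- Satisfaction of a constraint by a real valuation `u : X → ℝ`. It extends `Constr.sat` to the
valuations `up(v)`, which may take negative values. -/
def Constr.realSat (u : X → ℝ) : Constr X → Prop
  | .upper x o c => o.holds (u x) c
  | .lower c o x => o.holds c (u x)
  | .diag x y o d => o.holds (u x - u y) d

lemma Constr.sat_shift_iff_realSat {w : X → ℝ≥0} {u : X → ℝ} (hw : ∀ x, (w x : ℝ) = u x)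
    (δ : ℝ≥0) (φ : Constr X) : φ.sat (shift w δ) ↔ φ.realSat fun x => u x + δ := by
  obtain rfl : (fun x => (w x : ℝ)) = u := funext hw
  cases φ <;> rfl

variable [DecidableEq X] {up : X → AtomicUp X} {v v' : X → ℝ≥0}

namespace simG

lemma realSat_applyUpd_upper {x : X} {o : Ineq} {c : ℕ}
    (h : simG (wpUpd up (.upper x o c)) v v') (δ : ℝ≥0)
    (hv : (Constr.upper x o c).realSat fun x => applyUpd up v x + δ) :
    (Constr.upper x o c).realSat fun x => applyUpd up v' x + δ := by
  cases hx : up x with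
  | const k => simpa only [Constr.realSat, applyUpd, hx] using hv
  | add y d =>
    have subst_iff (r : ℝ) : o.holds (r + d + δ) c ↔ o.holds (r + δ) ((c - d : ℤ) : ℝ) :=
      Ineq.holds_congr_of_sub_eq_sub (by push_cast; ring)
    simp only [wpUpd, hx] at h
    simp only [Constr.realSat, applyUpd, hx, subst_iff] at hv ⊢
    exact h.holds_upper δ hv

lemma realSat_applyUpd_lower {x : X} {o : Ineq} {c : ℕ}
    (h : simG (wpUpd up (.lower c o x)) v v') (δ : ℝ≥0)
    (hv : (Constr.lower c o x).realSat fun x => applyUpd up v x + δ) :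
    (Constr.lower c o x).realSat fun x => applyUpd up v' x + δ := by
  cases hx : up x with
  | const k => simpa only [Constr.realSat, applyUpd, hx] using hv
  | add y d =>
    have subst_iff (r : ℝ) : o.holds (c : ℝ) (r + d + δ) ↔ o.holds ((c - d : ℤ) : ℝ) (r + δ) :=
      Ineq.holds_congr_of_sub_eq_sub (by push_cast; ring)
    simp only [wpUpd, hx] at h
    simp only [Constr.realSat, applyUpd, hx, subst_iff] at hv ⊢
    exact h.holds_lower δ hv

lemma realSat_applyUpd_diag {x y : X} {o : Ineq} {c : ℤ}
    (h : simG (wpUpd up (.diag x y o c)) v v')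
    (hv : (Constr.diag x y o c).realSat (applyUpd up v)) :
    (Constr.diag x y o c).realSat (applyUpd up v') := by
  cases hx : up x with
  | const c₁ =>
    cases hy : up y with
    | const c₂ => simpa only [Constr.realSat, applyUpd, hx, hy] using hv
    | add y₂ d₂ =>
      have subst_iff (r : ℝ) :
          o.holds (c₁ - (r + d₂)) c ↔ o.holds ((c₁ - d₂ - c : ℤ) : ℝ) (r + (0 : ℝ≥0)) :=
        Ineq.holds_congr_of_sub_eq_sub (by push_cast; ring)
      simp only [wpUpd, hx, hy] at h
      simp only [Constr.realSat, applyUpd, hx, hy, subst_iff] at hv ⊢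
      exact h.holds_lower 0 hv
  | add y₁ d₁ =>
    cases hy : up y with
    | const c₂ =>
      have subst_iff (r : ℝ) :
          o.holds (r + d₁ - c₂) c ↔ o.holds (r + (0 : ℝ≥0)) ((c + c₂ - d₁ : ℤ) : ℝ) :=
        Ineq.holds_congr_of_sub_eq_sub (by push_cast; ring)
      simp only [wpUpd, hx, hy] at h
      simp only [Constr.realSat, applyUpd, hx, hy, subst_iff] at hv ⊢
      exact h.holds_upper 0 hv
    | add y₂ d₂ =>
      have subst_iff (r s : ℝ) :
          o.holds (r + d₁ - (s + d₂)) c ↔ o.holds (r - s) ((c - d₁ + d₂ : ℤ) : ℝ) :=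
        Ineq.holds_congr_of_sub_eq_sub (by push_cast; ring)
      simp only [wpUpd, hx, hy] at h
      simp only [Constr.realSat, applyUpd, hx, hy, subst_iff] at hv ⊢
      by_cases hyy : y₁ = y₂
      · subst hyy
        simpa only [sub_self] using hv
      · rw [if_neg hyy] at h
        exact h.holds_diag hv

lemma realSat_applyUpd {φ : Constr X} (h : simG (wpUpd up φ) v v') (δ : ℝ≥0)
    (hv : φ.realSat fun x => applyUpd up v x + δ) :
    φ.realSat fun x => applyUpd up v' x + δ := by
  cases φ with
  | upper x o c => exact h.realSat_applyUpd_upper δ hv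
  | lower c o x => exact h.realSat_applyUpd_lower δ hv
  | diag x y o c =>
    simp only [Constr.realSat, add_sub_add_right_eq_sub] at hv ⊢
    exact h.realSat_applyUpd_diag hv

lemma of_wpUpdSet {G : Set (Constr X)} {w w' : X → ℝ≥0} (h : simG (wpUpdSet up G) v v')
    (hw : ∀ x, (w x : ℝ) = applyUpd up v x) (hw' : ∀ x, (w' x : ℝ) = applyUpd up v' x) :
    simG G w w' := by
  intro φ hφ δ hwφ
  rw [Constr.sat_shift_iff_realSat hw] at hwφ
  rw [Constr.sat_shift_iff_realSat hw']
  exact (h.mono (Set.subset_biUnion_of_mem hφ)).realSat_applyUpd δ hwφ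

lemma applyUpd_nonneg (h : simG (wpUpdSet up (nonnegConstrs X)) v v') {x : X}
    (hv : 0 ≤ applyUpd up v x) : 0 ≤ applyUpd up v' x := by
  have hx : Constr.lower 0 Ineq.le x ∈ nonnegConstrs X := ⟨x, rfl⟩
  have hφ := (h.mono (Set.subset_biUnion_of_mem hx)).realSat_applyUpd 0
  simpa only [Constr.realSat, Ineq.holds, Nat.cast_zero, NNReal.coe_zero, add_zero, hv,
    forall_const] using hφ

end simG

end Update

section Automaton

variable {Q X : Type} [DecidableEq X] {A : UTA Q X} {G : Q → Set (Constr X)}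

/-- A family of constraint sets closed under the state-based guard equations, i.e. satisfying them
with `⊇` in place of `=`. The inclusion is stated transition by transition. -/
def GuardClosed (A : UTA Q X) (G : Q → Set (Constr X)) : Prop :=
  ∀ t ∈ A.trans, (UTrans.grd t : Set (Constr X)) ∪ wpUpdSet (UTrans.upd t) (nonnegConstrs X)
    ∪ wpUpdSet (UTrans.upd t) (G (UTrans.tgt t)) ⊆ G (UTrans.src t)

lemma GuardEqU.guardClosed (hG : GuardEqU A G) : GuardClosed A G := by
  intro t ht
  rw [hG (UTrans.src t)]
  exact fun φ hφ => Set.mem_iUnion₂_of_mem ht (Set.mem_iUnion_of_mem rfl hφ)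

lemma GuardClosed.exists_uStep (hG : GuardClosed A G) {t : UTrans Q X} {q q₁ : Q}
    {v v' w : X → ℝ≥0} (h : simG (G q) v v') (hstep : UStep A t (q, v) (q₁, w)) :
    ∃ w', UStep A t (q, v') (q₁, w') ∧ simG (G q₁) w w' := by
  obtain ⟨ht, rfl, hguard, rfl, hw⟩ := hstep
  have hall := h.mono (hG t ht)
  have hgrd := hall.mono (Set.subset_union_left.trans Set.subset_union_left)
  have hnonneg := hall.mono (Set.subset_union_right.trans Set.subset_union_left)
  have htgt := hall.mono Set.subset_union_right
  have hupd (x : X) : 0 ≤ applyUpd (UTrans.upd t) v' x :=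
    hnonneg.applyUpd_nonneg (hw x ▸ (w x).coe_nonneg)
  exact ⟨fun x => ⟨_, hupd x⟩,
    ⟨ht, rfl, fun φ hφ => hgrd.sat hφ (hguard φ hφ), rfl, fun _ => rfl⟩,
    htgt.of_wpUpdSet hw fun _ => rfl⟩

end Automaton

theorem stmt13_general {Q X : Type} [DecidableEq X] (A : UTA Q X) (G : Q → Set (Constr X))
    (hG : GuardClosed A G) :
    IsSimulationU A (fun c c' => c.1 = c'.1 ∧ simG (G c.1) c.2 c'.2) := by
  refine ⟨fun c => ⟨rfl, simG.refl _ _⟩, ?_, ?_⟩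
  · rintro ⟨q, v⟩ ⟨_, v'⟩ ⟨_, v''⟩ ⟨rfl, h⟩ ⟨rfl, h'⟩
    exact ⟨rfl, h.trans h'⟩
  · rintro q v _ v' ⟨rfl, h⟩
    refine ⟨rfl, fun δ => ⟨δ, rfl, h.shift δ⟩, fun t c₁ hstep => ?_⟩
    obtain ⟨w', hstep', hsim⟩ := hG.exists_uStep h hstep
    exact ⟨w', hstep', rfl, hsim⟩

theorem stmt13 {Q X : Type} [Fintype Q] [Fintype X] [DecidableEq X] (A : UTA Q X)
    (G : Q → Set (Constr X)) (hfix : GuardEqU A G)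
    (hleast : ∀ G' : Q → Set (Constr X), GuardEqU A G' → ∀ q, G q ⊆ G' q) :
    IsSimulationU A (fun c c' => c.1 = c'.1 ∧ simG (G c.1) c.2 c'.2) :=
  stmt13_general A G hfix.guardClosed
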